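/- Let B, C > 0, let s_{21}, s_{22}, s_{23} : ℝ → ℝ be smooth B-periodic functions of x² with s_{23} > 0 everywhere, let s_{31}, s_{32}, s_{33} : ℝ → ℝ be smooth C-periodic functions of x³ with s_{33} < 0 everywhere, set s^{11}(x²,x³) = s_{22}(x²)s_{33}(x³) − s_{23}(x²)s_{32}(x³) and assume s^{11} > 0 everywhere, and let λ ∈ ℝ. Then there exists m ∈ ℝ such that for every smooth u : ℝ² → ℂ that is B-periodic in x² and C-periodic in x³, Re ∫₀^B ∫₀^C (L u)·conj(u)·s^{11} dx³ dx² ≥ m·∫₀^B ∫₀^C |u|²·s^{11} dx³ dx². -/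

import Mathlib

open scoped ContDiff
open MeasureTheory

/-- Partial derivative `∂₂` (first variable of `ℝ × ℝ`, the angular variable `x²`). -/
noncomputable def qd2 (f : ℝ × ℝ → ℂ) (p : ℝ × ℝ) : ℂ :=
  deriv (fun t => f (t, p.2)) p.1

/-- Partial derivative `∂₃` (second variable of `ℝ × ℝ`, the angular variable `x³`). -/
noncomputable def qd3 (f : ℝ × ℝ → ℂ) (p : ℝ × ℝ) : ℂ :=
  deriv (fun t => f (p.1, t)) p.2

/-- `A₂u = −∂₂²u − (λ²+1)·s₂₁(x²)·u`. -/
noncomputable def opA2 (s21 : ℝ → ℝ) (lam : ℝ) (u : ℝ × ℝ → ℂ) (p : ℝ × ℝ) : ℂ :=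
  - qd2 (qd2 u) p - (((lam ^ 2 + 1) * s21 p.1 : ℝ) : ℂ) * u p

/-- `A₃u = −∂₃²u − (λ²+1)·s₃₁(x³)·u`. -/
noncomputable def opA3 (s31 : ℝ → ℝ) (lam : ℝ) (u : ℝ × ℝ → ℂ) (p : ℝ × ℝ) : ℂ :=
  - qd3 (qd3 u) p - (((lam ^ 2 + 1) * s31 p.2 : ℝ) : ℂ) * u p

/-- `L u = −(s₃₃/s^{11})·A₂u + (s₂₃/s^{11})·A₃u`, with `s^{11} = s₂₂s₃₃ − s₂₃s₃₂`. -/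
noncomputable def opL (s21 s22 s23 s31 s32 s33 : ℝ → ℝ) (lam : ℝ)
    (u : ℝ × ℝ → ℂ) (p : ℝ × ℝ) : ℂ :=
  -((s33 p.2 / (s22 p.1 * s33 p.2 - s23 p.1 * s32 p.2) : ℝ) : ℂ) * opA2 s21 lam u p
    + ((s23 p.1 / (s22 p.1 * s33 p.2 - s23 p.1 * s32 p.2) : ℝ) : ℂ) * opA3 s31 lam u p

open Function Set
open scoped ComplexConjugate InnerProductSpace

/-!
The weight `s^{11}` cancels the denominators of `L`, so that the density `Re(Lu · ū) s^{11}` equals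
`s₃₃ Re(∂₂²u · ū) − s₂₃ Re(∂₃²u · ū) + (λ² + 1)(s₂₁s₃₃ − s₂₃s₃₁)|u|²`.
Since `s₃₃` does not depend on `x²`, nor `s₂₃` on `x³`, integration by parts over a period moves one
derivative onto `ū` without ever differentiating a coefficient, and `s₃₃ < 0 < s₂₃` makes the
resulting gradient terms nonnegative. The zeroth-order term is bounded below by a multiple of
`|u|² s^{11}` by compactness.
-/

section IntegrationByParts

variable {E : Type*} [NormedAddCommGroup E] [InnerProductSpace ℝ E]

theorem integral_inner_deriv_eq_sub {v w : ℝ → E} (hv : ContDiff ℝ 1 v) (hw : ContDiff ℝ 1 w)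
    (a b : ℝ) :
    ∫ x in a..b, ⟪v x, deriv w x⟫_ℝ
      = ⟪v b, w b⟫_ℝ - ⟪v a, w a⟫_ℝ - ∫ x in a..b, ⟪deriv v x, w x⟫_ℝ := by
  have hv' : Continuous (deriv v) := hv.continuous_deriv le_rfl
  have hw' : Continuous (deriv w) := hw.continuous_deriv le_rfl
  have hvw' : IntervalIntegrable (fun x => ⟪v x, deriv w x⟫_ℝ) volume a b :=
    (hv.continuous.inner hw').intervalIntegrable a b
  have hv'w : IntervalIntegrable (fun x => ⟪deriv v x, w x⟫_ℝ) volume a b :=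
    (hv'.inner hw.continuous).intervalIntegrable a b
  have hderiv : ∀ x, HasDerivAt (fun x => ⟪v x, w x⟫_ℝ)
      (⟪v x, deriv w x⟫_ℝ + ⟪deriv v x, w x⟫_ℝ) x := fun x =>
    ((hv.differentiable one_ne_zero x).hasDerivAt).inner ℝ
      ((hw.differentiable one_ne_zero x).hasDerivAt)
  rw [eq_sub_iff_add_eq, ← intervalIntegral.integral_add hvw' hv'w]
  exact intervalIntegral.integral_eq_sub_of_hasDerivAt (fun x _ => hderiv x) (hvw'.add hv'w)

theorem integral_inner_deriv_of_periodic {v w : ℝ → E} {T : ℝ} (hv : ContDiff ℝ 1 v)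
    (hw : ContDiff ℝ 1 w) (hvT : Periodic v T) (hwT : Periodic w T) (a : ℝ) :
    ∫ x in a..a + T, ⟪v x, deriv w x⟫_ℝ = -∫ x in a..a + T, ⟪deriv v x, w x⟫_ℝ := by
  rw [integral_inner_deriv_eq_sub hv hw, hvT a, hwT a, sub_self, zero_sub]

theorem periodic_deriv {𝕜 F : Type*} [NontriviallyNormedField 𝕜] [NormedAddCommGroup F]
    [NormedSpace 𝕜 F] {v : 𝕜 → F} {T : 𝕜} (hv : Periodic v T) :
    Periodic (deriv v) T := fun x => by
  rw [← deriv_comp_add_const, funext hv]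

theorem integral_inner_deriv_deriv_of_periodic {v : ℝ → E} {T : ℝ} (hv : ContDiff ℝ 2 v)
    (hvT : Periodic v T) (a : ℝ) :
    ∫ x in a..a + T, ⟪v x, deriv (deriv v) x⟫_ℝ = -∫ x in a..a + T, ‖deriv v x‖ ^ 2 := by
  have hv' : ContDiff ℝ 1 (deriv v) := ContDiff.deriv' hv
  simpa only [real_inner_self_eq_norm_sq] using
    integral_inner_deriv_of_periodic (hv.of_le one_le_two) hv' hvT (periodic_deriv hvT) a

end IntegrationByParts

section IteratedIntegral

variable {E : Type*} [NormedAddCommGroup E] [NormedSpace ℝ E]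

theorem integral_integral_eq_setIntegral_Icc {a b c d : ℝ} (hab : a ≤ b) (hcd : c ≤ d)
    {F : ℝ × ℝ → E} (hF : Continuous F) :
    ∫ x in a..b, ∫ y in c..d, F (x, y) = ∫ p in Icc (a, c) (b, d), F p := by
  have hint : IntegrableOn F (Icc a b ×ˢ Icc c d) (volume.prod volume) := by
    rw [Icc_prod_Icc]
    exact hF.integrableOn_Icc
  rw [← Icc_prod_Icc, Measure.volume_eq_prod, setIntegral_prod F hint]
  simp only [intervalIntegral.integral_of_le hab, intervalIntegral.integral_of_le hcd,
    integral_Icc_eq_integral_Ioc]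

theorem integral_integral_swap_of_continuous {F : ℝ → ℝ → E}
    (hF : Continuous (uncurry F)) (a b c d : ℝ) :
    ∫ x in a..b, ∫ y in c..d, F x y = ∫ y in c..d, ∫ x in a..b, F x y :=
  intervalIntegral_intervalIntegral_swap <|
    (hF.continuousOn.integrableOn_compact (isCompact_uIcc.prod isCompact_uIcc)).mono_set
      (prod_mono uIoc_subset_uIcc uIoc_subset_uIcc)

theorem re_integral_integral {a b c d : ℝ} (hab : a ≤ b) (hcd : c ≤ d) {F : ℝ × ℝ → ℂ}
    (hF : Continuous F) :
    (∫ x in a..b, ∫ y in c..d, F (x, y)).re = ∫ p in Icc (a, c) (b, d), (F p).re := by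
  rw [integral_integral_eq_setIntegral_Icc hab hcd hF]
  exact (integral_re hF.integrableOn_Icc).symm

end IteratedIntegral

theorem exists_forall_mul_le_of_isCompact {X : Type*} [TopologicalSpace X] {K : Set X}
    (hK : IsCompact K) {f g : X → ℝ} (hf : ContinuousOn f K) (hg : ContinuousOn g K)
    (hpos : ∀ x ∈ K, 0 < g x) :
    ∃ m : ℝ, ∀ x ∈ K, m * g x ≤ f x := by
  obtain ⟨m, hm⟩ := hK.bddBelow_image (hf.div hg fun x hx => (hpos x hx).ne')
  exact ⟨m, fun x hx => (le_div_iff₀ (hpos x hx)).1 (hm (mem_image_of_mem _ hx))⟩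

section PartialDerivatives

variable {u : ℝ × ℝ → ℂ}

theorem contDiff_qd2 {n : ℕ∞ω} (hu : ContDiff ℝ (n + 1) u) : ContDiff ℝ n (qd2 u) :=
  -- `deriv f t` unfolds to `fderiv ℝ f t 1`, whence the constant direction `1`.
  ContDiff.fderiv_apply (f := fun p t => u (t, p.2)) (k := fun _ => 1)
    (hu.comp (contDiff_snd.prodMk contDiff_fst.snd)) contDiff_fst contDiff_const le_rfl

theorem contDiff_qd3 {n : ℕ∞ω} (hu : ContDiff ℝ (n + 1) u) : ContDiff ℝ n (qd3 u) :=
  ContDiff.fderiv_apply (f := fun p t => u (p.1, t)) (k := fun _ => 1)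
    (hu.comp (contDiff_fst.fst.prodMk contDiff_snd)) contDiff_snd contDiff_const le_rfl

theorem continuous_qd2_qd2 (hu : ContDiff ℝ 2 u) : Continuous (qd2 (qd2 u)) :=
  (contDiff_qd2 (n := 0) (contDiff_qd2 (n := 1) hu)).continuous

theorem continuous_qd3_qd3 (hu : ContDiff ℝ 2 u) : Continuous (qd3 (qd3 u)) :=
  (contDiff_qd3 (n := 0) (contDiff_qd3 (n := 1) hu)).continuous

theorem integral_integral_mul_inner_qd3_qd3 {C : ℝ} (hu : ContDiff ℝ 2 u)
    (hper : ∀ x, Periodic (fun y => u (x, y)) C) (w : ℝ → ℝ) (a b c : ℝ) :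
    ∫ x in a..b, ∫ y in c..c + C, w x * ⟪u (x, y), qd3 (qd3 u) (x, y)⟫_ℝ
      = -∫ x in a..b, ∫ y in c..c + C, w x * ‖qd3 u (x, y)‖ ^ 2 := by
  have hslice : ∀ x, ∫ y in c..c + C, ⟪u (x, y), qd3 (qd3 u) (x, y)⟫_ℝ
      = -∫ y in c..c + C, ‖qd3 u (x, y)‖ ^ 2 := fun x =>
    integral_inner_deriv_deriv_of_periodic (hu.comp (contDiff_prodMk_right x)) (hper x) c
  simp only [intervalIntegral.integral_const_mul, hslice, mul_neg, intervalIntegral.integral_neg]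

theorem integral_integral_mul_inner_qd2_qd2 {B : ℝ} (hu : ContDiff ℝ 2 u)
    (hper : ∀ y, Periodic (fun x => u (x, y)) B) {w : ℝ → ℝ} (hw : Continuous w) (a c d : ℝ) :
    ∫ x in a..a + B, ∫ y in c..d, w y * ⟪u (x, y), qd2 (qd2 u) (x, y)⟫_ℝ
      = -∫ x in a..a + B, ∫ y in c..d, w y * ‖qd2 u (x, y)‖ ^ 2 := by
  have hu₂ : Continuous (qd2 u) := (contDiff_qd2 (n := 1) hu).continuous
  have hu₂₂ : Continuous (qd2 (qd2 u)) := continuous_qd2_qd2 hu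
  rw [integral_integral_swap_of_continuous (by fun_prop),
    integral_integral_swap_of_continuous (F := fun x y => w y * ‖qd2 u (x, y)‖ ^ 2) (by fun_prop)]
  -- `qd2 u (x, y)` is definitionally `qd3 (u ∘ Prod.swap) (y, x)`.
  exact integral_integral_mul_inner_qd3_qd3 (u := u ∘ Prod.swap)
    (hu.comp (contDiff_snd.prodMk contDiff_fst)) hper w c d a

end PartialDerivatives

section AngularOperator

variable {s21 s22 s23 s31 s32 s33 : ℝ → ℝ} {lam : ℝ} {u : ℝ × ℝ → ℂ}

/-- The zeroth-order coefficient `(λ² + 1)(s₂₁s₃₃ − s₂₃s₃₁)` of the operator `s^{11} L`. -/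
def opLPotential (s21 s23 s31 s33 : ℝ → ℝ) (lam : ℝ) (p : ℝ × ℝ) : ℝ :=
  (lam ^ 2 + 1) * (s21 p.1 * s33 p.2 - s23 p.1 * s31 p.2)

/-- The density `s₂₃|∂₃u|² − s₃₃|∂₂u|² + (λ² + 1)(s₂₁s₃₃ − s₂₃s₃₁)|u|²` of the quadratic form of `L`
on `L²(𝕋², s^{11} dx² dx³)`, with respect to `dx² dx³`. -/
noncomputable def opLFormDensity (s21 s23 s31 s33 : ℝ → ℝ) (lam : ℝ) (u : ℝ × ℝ → ℂ)
    (p : ℝ × ℝ) : ℝ :=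
  s23 p.1 * ‖qd3 u p‖ ^ 2 - s33 p.2 * ‖qd2 u p‖ ^ 2
    + opLPotential s21 s23 s31 s33 lam p * ‖u p‖ ^ 2

theorem continuous_opLPotential (h21 : Continuous s21) (h23 : Continuous s23)
    (h31 : Continuous s31) (h33 : Continuous s33) :
    Continuous (opLPotential s21 s23 s31 s33 lam) := by
  unfold opLPotential
  fun_prop

theorem continuous_opLFormDensity (h21 : Continuous s21) (h23 : Continuous s23)
    (h31 : Continuous s31) (h33 : Continuous s33) (hu : ContDiff ℝ 1 u) :
    Continuous (opLFormDensity s21 s23 s31 s33 lam u) := by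
  have hV : Continuous (opLPotential s21 s23 s31 s33 lam) := continuous_opLPotential h21 h23 h31 h33
  have hu₂ : Continuous (qd2 u) := (contDiff_qd2 (n := 0) hu).continuous
  have hu₃ : Continuous (qd3 u) := (contDiff_qd3 (n := 0) hu).continuous
  unfold opLFormDensity
  fun_prop

theorem opLPotential_mul_le_opLFormDensity {p : ℝ × ℝ} (h23 : 0 ≤ s23 p.1) (h33 : s33 p.2 ≤ 0) :
    opLPotential s21 s23 s31 s33 lam p * ‖u p‖ ^ 2 ≤ opLFormDensity s21 s23 s31 s33 lam u p := by
  have h₃ : 0 ≤ s23 p.1 * ‖qd3 u p‖ ^ 2 := mul_nonneg h23 (sq_nonneg _)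
  have h₂ : s33 p.2 * ‖qd2 u p‖ ^ 2 ≤ 0 := mul_nonpos_of_nonpos_of_nonneg h33 (sq_nonneg _)
  unfold opLFormDensity
  linarith

theorem opL_mul_weight {p : ℝ × ℝ} (h : s22 p.1 * s33 p.2 - s23 p.1 * s32 p.2 ≠ 0) :
    opL s21 s22 s23 s31 s32 s33 lam u p * ((s22 p.1 * s33 p.2 - s23 p.1 * s32 p.2 : ℝ) : ℂ)
      = s33 p.2 * qd2 (qd2 u) p - s23 p.1 * qd3 (qd3 u) p
        + opLPotential s21 s23 s31 s33 lam p * u p := by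
  have h' : ((s22 p.1 * s33 p.2 - s23 p.1 * s32 p.2 : ℝ) : ℂ) ≠ 0 := Complex.ofReal_ne_zero.2 h
  simp only [opL, opA2, opA3, opLPotential, Complex.ofReal_div]
  generalize ((s22 p.1 * s33 p.2 - s23 p.1 * s32 p.2 : ℝ) : ℂ) = s11 at h'
  field_simp
  push_cast
  ring

theorem re_opL_mul_conj_mul_weight {p : ℝ × ℝ}
    (h : s22 p.1 * s33 p.2 - s23 p.1 * s32 p.2 ≠ 0) :
    (opL s21 s22 s23 s31 s32 s33 lam u p * conj (u p)
        * ((s22 p.1 * s33 p.2 - s23 p.1 * s32 p.2 : ℝ) : ℂ)).re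
      = s33 p.2 * ⟪u p, qd2 (qd2 u) p⟫_ℝ - s23 p.1 * ⟪u p, qd3 (qd3 u) p⟫_ℝ
        + opLPotential s21 s23 s31 s33 lam p * ‖u p‖ ^ 2 := by
  rw [mul_right_comm, opL_mul_weight h]
  simp only [add_mul, sub_mul, mul_assoc, Complex.add_re, Complex.sub_re, Complex.re_ofReal_mul,
    ← Complex.inner, real_inner_self_eq_norm_sq]

theorem continuous_opL (h21 : Continuous s21) (h22 : Continuous s22) (h23 : Continuous s23)
    (h31 : Continuous s31) (h32 : Continuous s32) (h33 : Continuous s33)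
    (h11 : ∀ p : ℝ × ℝ, s22 p.1 * s33 p.2 - s23 p.1 * s32 p.2 ≠ 0) (hu : ContDiff ℝ 2 u) :
    Continuous (opL s21 s22 s23 s31 s32 s33 lam u) := by
  have hu₀ : Continuous u := hu.continuous
  have hu₂₂ : Continuous (qd2 (qd2 u)) := continuous_qd2_qd2 hu
  have hu₃₃ : Continuous (qd3 (qd3 u)) := continuous_qd3_qd3 hu
  unfold opL opA2 opA3
  fun_prop (disch := exact h11 _)

theorem setIntegral_opLFormDensity {B C : ℝ} (hB : 0 ≤ B) (hC : 0 ≤ C)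
    (h21 : Continuous s21) (h23 : Continuous s23) (h31 : Continuous s31) (h33 : Continuous s33)
    (hu : ContDiff ℝ 2 u) (huB : ∀ y, Periodic (fun x => u (x, y)) B)
    (huC : ∀ x, Periodic (fun y => u (x, y)) C) :
    ∫ p in Icc (0, 0) (B, C), opLFormDensity s21 s23 s31 s33 lam u p
      = ∫ p in Icc (0, 0) (B, C), (s33 p.2 * ⟪u p, qd2 (qd2 u) p⟫_ℝ
          - s23 p.1 * ⟪u p, qd3 (qd3 u) p⟫_ℝ + opLPotential s21 s23 s31 s33 lam p * ‖u p‖ ^ 2) := by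
  have hu₀ : Continuous u := hu.continuous
  have hu₂ : Continuous (qd2 u) := (contDiff_qd2 (n := 1) hu).continuous
  have hu₃ : Continuous (qd3 u) := (contDiff_qd3 (n := 1) hu).continuous
  have hu₂₂ : Continuous (qd2 (qd2 u)) := continuous_qd2_qd2 hu
  have hu₃₃ : Continuous (qd3 (qd3 u)) := continuous_qd3_qd3 hu
  have hV : Continuous (opLPotential s21 s23 s31 s33 lam) := continuous_opLPotential h21 h23 h31 h33
  have iterated {F : ℝ × ℝ → ℝ} (hF : Continuous F) :
      ∫ x in (0 : ℝ)..B, ∫ y in (0 : ℝ)..C, F (x, y) = ∫ p in Icc (0, 0) (B, C), F p :=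
    integral_integral_eq_setIntegral_Icc hB hC hF
  have integrable {F : ℝ × ℝ → ℝ} (hF : Continuous F) : IntegrableOn F (Icc (0, 0) (B, C)) :=
    hF.integrableOn_Icc
  have parts₂ : ∫ p in Icc (0, 0) (B, C), s33 p.2 * ⟪u p, qd2 (qd2 u) p⟫_ℝ
      = -∫ p in Icc (0, 0) (B, C), s33 p.2 * ‖qd2 u p‖ ^ 2 := by
    rw [← iterated (by fun_prop), ← iterated (by fun_prop)]
    simpa only [zero_add] using integral_integral_mul_inner_qd2_qd2 hu huB h33 0 0 C
  have parts₃ : ∫ p in Icc (0, 0) (B, C), s23 p.1 * ⟪u p, qd3 (qd3 u) p⟫_ℝ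
      = -∫ p in Icc (0, 0) (B, C), s23 p.1 * ‖qd3 u p‖ ^ 2 := by
    rw [← iterated (by fun_prop), ← iterated (by fun_prop)]
    simpa only [zero_add] using integral_integral_mul_inner_qd3_qd3 hu huC s23 0 B 0
  simp only [opLFormDensity]
  rw [integral_add (integrable (by fun_prop)) (integrable (by fun_prop)),
    integral_sub (integrable (by fun_prop)) (integrable (by fun_prop)),
    integral_add (integrable (by fun_prop)) (integrable (by fun_prop)),
    integral_sub (integrable (by fun_prop)) (integrable (by fun_prop)), parts₂, parts₃]
  ring

theorem re_integral_opL_mul_conj_mul_weight {B C : ℝ} (hB : 0 ≤ B) (hC : 0 ≤ C)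
    (h21 : Continuous s21) (h22 : Continuous s22) (h23 : Continuous s23)
    (h31 : Continuous s31) (h32 : Continuous s32) (h33 : Continuous s33)
    (h11 : ∀ p : ℝ × ℝ, s22 p.1 * s33 p.2 - s23 p.1 * s32 p.2 ≠ 0) (hu : ContDiff ℝ 2 u)
    (huB : ∀ y, Periodic (fun x => u (x, y)) B) (huC : ∀ x, Periodic (fun y => u (x, y)) C) :
    (∫ x in (0 : ℝ)..B, ∫ y in (0 : ℝ)..C,
        opL s21 s22 s23 s31 s32 s33 lam u (x, y) * conj (u (x, y))
          * ((s22 x * s33 y - s23 x * s32 y : ℝ) : ℂ)).re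
      = ∫ p in Icc (0, 0) (B, C), opLFormDensity s21 s23 s31 s33 lam u p := by
  have hL : Continuous (opL s21 s22 s23 s31 s32 s33 lam u) :=
    continuous_opL h21 h22 h23 h31 h32 h33 h11 hu
  have hu₀ : Continuous u := hu.continuous
  have hintegrand : Continuous fun p : ℝ × ℝ => opL s21 s22 s23 s31 s32 s33 lam u p * conj (u p)
      * ((s22 p.1 * s33 p.2 - s23 p.1 * s32 p.2 : ℝ) : ℂ) := by fun_prop
  rw [re_integral_integral hB hC hintegrand,
    setIntegral_opLFormDensity hB hC h21 h23 h31 h33 hu huB huC]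
  simp only [re_opL_mul_conj_mul_weight (h11 _)]

theorem stmt8_general {B C lam : ℝ} (hB : 0 ≤ B) (hC : 0 ≤ C)
    {s21 s22 s23 s31 s32 s33 : ℝ → ℝ}
    (h21 : Continuous s21) (h22 : Continuous s22) (h23 : Continuous s23)
    (h31 : Continuous s31) (h32 : Continuous s32) (h33 : Continuous s33)
    (h23nonneg : ∀ x, 0 ≤ s23 x) (h33nonpos : ∀ x, s33 x ≤ 0)
    (h11pos : ∀ p : ℝ × ℝ, 0 < s22 p.1 * s33 p.2 - s23 p.1 * s32 p.2) :
    ∃ m : ℝ, ∀ u : ℝ × ℝ → ℂ, ContDiff ℝ 2 u →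
      (∀ y, Periodic (fun x => u (x, y)) B) → (∀ x, Periodic (fun y => u (x, y)) C) →
      m * (∫ x in (0 : ℝ)..B, ∫ y in (0 : ℝ)..C,
            ‖u (x, y)‖ ^ 2 * (s22 x * s33 y - s23 x * s32 y))
        ≤ (∫ x in (0 : ℝ)..B, ∫ y in (0 : ℝ)..C,
            opL s21 s22 s23 s31 s32 s33 lam u (x, y) * conj (u (x, y))
              * ((s22 x * s33 y - s23 x * s32 y : ℝ) : ℂ)).re := by
  have h11cont : Continuous fun p : ℝ × ℝ => s22 p.1 * s33 p.2 - s23 p.1 * s32 p.2 := by fun_prop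
  obtain ⟨m, hm⟩ := exists_forall_mul_le_of_isCompact (isCompact_Icc (a := (0, 0)) (b := (B, C)))
    (continuous_opLPotential (lam := lam) h21 h23 h31 h33).continuousOn h11cont.continuousOn
    fun p _ => h11pos p
  refine ⟨m, fun u hu huB huC => ?_⟩
  have hu₀ : Continuous u := hu.continuous
  have hnorm : Continuous fun p : ℝ × ℝ =>
      ‖u p‖ ^ 2 * (s22 p.1 * s33 p.2 - s23 p.1 * s32 p.2) := by fun_prop
  have hdensity : Continuous (opLFormDensity s21 s23 s31 s33 lam u) :=
    continuous_opLFormDensity h21 h23 h31 h33 (hu.of_le one_le_two)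
  rw [re_integral_opL_mul_conj_mul_weight hB hC h21 h22 h23 h31 h32 h33
      (fun p => (h11pos p).ne') hu huB huC,
    integral_integral_eq_setIntegral_Icc hB hC hnorm, ← integral_const_mul]
  refine setIntegral_mono_on (hnorm.integrableOn_Icc.const_mul m) hdensity.integrableOn_Icc
    measurableSet_Icc fun p hp => ?_
  calc m * (‖u p‖ ^ 2 * (s22 p.1 * s33 p.2 - s23 p.1 * s32 p.2))
      = m * (s22 p.1 * s33 p.2 - s23 p.1 * s32 p.2) * ‖u p‖ ^ 2 := by ring
    _ ≤ opLPotential s21 s23 s31 s33 lam p * ‖u p‖ ^ 2 := by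
      gcongr
      exact hm p hp
    _ ≤ opLFormDensity s21 s23 s31 s33 lam u p :=
      opLPotential_mul_le_opLFormDensity (h23nonneg p.1) (h33nonpos p.2)

end AngularOperator

/-- **Lemma 2.3(4).** The angular operator `L` is semibounded from below on
`L²(𝕋², s^{11} dx² dx³)`. -/
theorem stmt8 (B C lam : ℝ) (hB : 0 < B) (hC : 0 < C)
    (s21 s22 s23 s31 s32 s33 : ℝ → ℝ)
    (h21 : ContDiff ℝ ∞ s21) (h22 : ContDiff ℝ ∞ s22) (h23 : ContDiff ℝ ∞ s23)
    (h31 : ContDiff ℝ ∞ s31) (h32 : ContDiff ℝ ∞ s32) (h33 : ContDiff ℝ ∞ s33)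
    (hp21 : Function.Periodic s21 B) (hp22 : Function.Periodic s22 B)
    (hp23 : Function.Periodic s23 B)
    (hp31 : Function.Periodic s31 C) (hp32 : Function.Periodic s32 C)
    (hp33 : Function.Periodic s33 C)
    (h23pos : ∀ x : ℝ, 0 < s23 x) (h33neg : ∀ x : ℝ, s33 x < 0)
    (hm11 : ∀ p : ℝ × ℝ, 0 < s22 p.1 * s33 p.2 - s23 p.1 * s32 p.2) :
    ∃ m : ℝ, ∀ u : ℝ × ℝ → ℂ, ContDiff ℝ ∞ u →
      (∀ x y : ℝ, u (x + B, y) = u (x, y)) → (∀ x y : ℝ, u (x, y + C) = u (x, y)) →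
      m * (∫ x in (0 : ℝ)..B, ∫ y in (0 : ℝ)..C,
            ‖u (x, y)‖ ^ 2 * (s22 x * s33 y - s23 x * s32 y))
        ≤ (∫ x in (0 : ℝ)..B, ∫ y in (0 : ℝ)..C,
            opL s21 s22 s23 s31 s32 s33 lam u (x, y) * (starRingEnd ℂ) (u (x, y))
              * ((s22 x * s33 y - s23 x * s32 y : ℝ) : ℂ)).re := by
  obtain ⟨m, hm⟩ := stmt8_general (lam := lam) hB.le hC.le h21.continuous h22.continuous
    h23.continuous h31.continuous h32.continuous h33.continuous (fun x => (h23pos x).le)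
    (fun x => (h33neg x).le) hm11
  exact ⟨m, fun u hu huB huC => hm u (mod_cast contDiff_infty.1 hu 2) (fun y x => huB x y) huC⟩
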